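/- arXiv:2012.06698 — 2 statements merged into one kernel-verified Lean document; each statement's English description precedes it below -/
import Mathlib

section
/- Let n, k, ℓ be integers with k ≥ 2, ℓ ≥ 1 and n ≥ k+ℓ. Let H₁ be the symmetric digraph whose underlying undirected graph is the join K_ℓ ∨ \bar{K}_{n−ℓ} (the graph obtained from disjoint copies of the complete graph K_ℓ and the empty graph on n−ℓ vertices by adding all edges between them). Then κ_k(H₁) = ℓ. -/
/-!
Write `A` for the `ℓ` clique vertices and `B` for the other `n - ℓ` vertices.

Upper bound: take `S ⊆ B` with `k` elements. In any `(S,r)`-tree the root has an out-neighbour,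
which lies in `A` because `B` is independent, hence outside `S`. Internally disjoint trees therefore
use different vertices of `A` at this place, so there are at most `ℓ` of them
(`kappaSr_le_of_indep`).

Lower bound: for every `S` and `r ∈ S`, each `a ∈ A` is the centre of a tree consisting of a path
from `r` to `a` followed by the arcs from `a` to the remaining vertices of `S` (`hubTree`).
The path is the single arc `r → a` (or is trivial, if `a = r`), except when `r` and `a ≠ r` both lie
in `A ∩ S`: then `r → a` already belongs to the tree centred at `r`, and the path is `r → b → a`
with a private vertex `b ∈ B \ S`. There are enough such vertices, because
`|A ∪ S| + |A ∩ S| = ℓ + k ≤ n` (`exists_spare`).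
-/

/-!
Formalization of directed tree connectivity (Sun, "Extremal results for
directed tree connectivity").

A digraph (no loops, no parallel arcs) on a vertex type `V` is given by an
irreflexive adjacency relation.  Out-trees, `(S,r)`-trees, the parameters
`κ_k`, `λ_k`, minimally generalized `(k,ℓ)`-vertex/arc-strongly connected
digraphs, the families `D_{n,1}`, `D_{n,2}` and the extremal functions
`f, g, F, G` are defined below.
-/

namespace TreeConn

/-- A digraph without loops or parallel arcs. -/
structure Dgr (V : Type) where
  Adj : V → V → Prop
  loopless : ∀ v, ¬ Adj v v

variable {V : Type}

/-- The arc set of a digraph, as a set of ordered pairs. -/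
def Dgr.Arcs (D : Dgr V) : Set (V × V) := {p | D.Adj p.1 p.2}

/-- Delete a single arc. -/
def Dgr.deleteArc (D : Dgr V) (e : V × V) : Dgr V :=
  ⟨fun u v => D.Adj u v ∧ (u, v) ≠ e, fun v h => D.loopless v h.1⟩

/-- Delete a set of arcs. -/
def Dgr.deleteArcs (D : Dgr V) (M : Set (V × V)) : Dgr V :=
  ⟨fun u v => D.Adj u v ∧ (u, v) ∉ M, fun v h => D.loopless v h.1⟩

/-- Vertices incident to some arc of the arc set `T`. -/
def averts (T : Set (V × V)) : Set V := {v | ∃ u, (u, v) ∈ T ∨ (v, u) ∈ T}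

/-- Vertex set of the tree with arc set `T` and root `r`. -/
def tverts (T : Set (V × V)) (r : V) : Set V := averts T ∪ {r}

/-- The arc set `T` forms an out-tree rooted at `r`: every vertex incident
to `T` is reachable from `r` inside `T`, the root has in-degree `0`, and
every other vertex has in-degree exactly one. -/
def IsOutTree (T : Set (V × V)) (r : V) : Prop :=
  (∀ v ∈ averts T, Relation.ReflTransGen (fun a b => (a, b) ∈ T) r v) ∧
  (∀ p ∈ T, p.2 ≠ r) ∧
  (∀ v ∈ averts T, v ≠ r → ∃! u, (u, v) ∈ T)

/-- `T` is an `(S, r)`-tree of `D`: an out-tree of `D` rooted at `r`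
containing all vertices of `S`. -/
def IsSRTree (D : Dgr V) (S : Set V) (r : V) (T : Set (V × V)) : Prop :=
  T ⊆ D.Arcs ∧ IsOutTree T r ∧ S ⊆ tverts T r

/-- `T` is an out-branching (spanning out-tree) of `D` rooted at `r`. -/
def IsOutBranching (D : Dgr V) (r : V) (T : Set (V × V)) : Prop :=
  T ⊆ D.Arcs ∧ IsOutTree T r ∧ tverts T r = Set.univ

/-- Two trees (arc sets) are arc-disjoint. -/
def ArcDisj (T₁ T₂ : Set (V × V)) : Prop := T₁ ∩ T₂ = ∅

/-- Two arc-disjoint `(S,r)`-trees are internally disjoint: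
`V(T₁) ∩ V(T₂) = S`. -/
def IntDisj (S : Set V) (r : V) (T₁ T₂ : Set (V × V)) : Prop :=
  ArcDisj T₁ T₂ ∧ tverts T₁ r ∩ tverts T₂ r = S

/-- `κ_{S,r}(D)`: maximum number of pairwise internally disjoint
`(S,r)`-trees in `D`. -/
noncomputable def kappaSr (D : Dgr V) (S : Set V) (r : V) : ℕ :=
  sSup {m | ∃ f : Fin m → Set (V × V), (∀ i, IsSRTree D S r (f i)) ∧
    ∀ i j, i ≠ j → IntDisj S r (f i) (f j)}

/-- `λ_{S,r}(D)`: maximum number of pairwise arc-disjoint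
`(S,r)`-trees in `D`. -/
noncomputable def lambdaSr (D : Dgr V) (S : Set V) (r : V) : ℕ :=
  sSup {m | ∃ f : Fin m → Set (V × V), (∀ i, IsSRTree D S r (f i)) ∧
    ∀ i j, i ≠ j → ArcDisj (f i) (f j)}

/-- The generalized `k`-vertex-strong connectivity `κ_k(D)`. -/
noncomputable def kappaK (D : Dgr V) (k : ℕ) : ℕ :=
  sInf {m | ∃ S : Set V, ∃ r ∈ S, S.ncard = k ∧ m = kappaSr D S r}

/-- The generalized `k`-arc-strong connectivity `λ_k(D)`. -/
noncomputable def lambdaK (D : Dgr V) (k : ℕ) : ℕ :=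
  sInf {m | ∃ S : Set V, ∃ r ∈ S, S.ncard = k ∧ m = lambdaSr D S r}

/-- A digraph is strong if every vertex can reach every other vertex. -/
def Strong (D : Dgr V) : Prop := ∀ u v, Relation.ReflTransGen D.Adj u v

/-- A digraph is minimally strong if it is strong but deleting any arc
destroys strongness. -/
def MinimallyStrong (D : Dgr V) : Prop :=
  Strong D ∧ ∀ e ∈ D.Arcs, ¬ Strong (D.deleteArc e)

/-- `D` is minimally generalized `(k, ℓ)`-vertex-strongly connected. -/
def MinVSC (D : Dgr V) (k ℓ : ℕ) : Prop :=
  ℓ ≤ kappaK D k ∧ ∀ e ∈ D.Arcs, kappaK (D.deleteArc e) k ≤ ℓ - 1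

/-- `D` is minimally generalized `(k, ℓ)`-arc-strongly connected. -/
def MinASC (D : Dgr V) (k ℓ : ℕ) : Prop :=
  ℓ ≤ lambdaK D k ∧ ∀ e ∈ D.Arcs, lambdaK (D.deleteArc e) k ≤ ℓ - 1

/-- The complete digraph `↔K_n` on `Fin n`. -/
def completeD (n : ℕ) : Dgr (Fin n) := ⟨fun u v => u ≠ v, fun _ h => h rfl⟩

/-- The arc set `M` induces a vertex-disjoint union of directed cycles
(2-cycles allowed) whose vertex set is exactly `W`: all arcs of `M` are
non-loops inside `W`, and every vertex of `W` has exactly one out-arc and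
exactly one in-arc in `M`. -/
def CycleFactorOn (M : Set (V × V)) (W : Set V) : Prop :=
  (∀ p ∈ M, p.1 ∈ W ∧ p.2 ∈ W ∧ p.1 ≠ p.2) ∧
  (∀ v ∈ W, ∃! u, (v, u) ∈ M) ∧
  (∀ v ∈ W, ∃! u, (u, v) ∈ M)

/-- The family `D_{n,1}`: digraphs obtained from `↔K_n` by deleting an arc
set `M` inducing a vertex-disjoint union of cycles covering all `n`
vertices. -/
def D1 (n : ℕ) : Set (Dgr (Fin n)) :=
  {D | ∃ M : Set (Fin n × Fin n), CycleFactorOn M Set.univ ∧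
    D = (completeD n).deleteArcs M}

/-- The family `D_{n,2}`: digraphs obtained from `↔K_n` by deleting an arc
set `M` inducing a vertex-disjoint union of cycles covering exactly `n - 1`
vertices. -/
def D2 (n : ℕ) : Set (Dgr (Fin n)) :=
  {D | ∃ M : Set (Fin n × Fin n), ∃ w : Fin n, CycleFactorOn M ({w}ᶜ) ∧
    D = (completeD n).deleteArcs M}

/-- `f(n,k,ℓ)`: minimum number of arcs of a minimally generalized
`(k,ℓ)`-vertex-strongly connected digraph of order `n`. -/
noncomputable def fMin (n k ℓ : ℕ) : ℕ :=
  sInf {m | ∃ D : Dgr (Fin n), MinVSC D k ℓ ∧ D.Arcs.ncard = m}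

/-- `g(n,k,ℓ)`: minimum number of arcs of a minimally generalized
`(k,ℓ)`-arc-strongly connected digraph of order `n`. -/
noncomputable def gMin (n k ℓ : ℕ) : ℕ :=
  sInf {m | ∃ D : Dgr (Fin n), MinASC D k ℓ ∧ D.Arcs.ncard = m}

/-- `F(n,k,ℓ)`: maximum number of arcs of a minimally generalized
`(k,ℓ)`-vertex-strongly connected digraph of order `n`. -/
noncomputable def FMax (n k ℓ : ℕ) : ℕ :=
  sSup {m | ∃ D : Dgr (Fin n), MinVSC D k ℓ ∧ D.Arcs.ncard = m}

/-- `G(n,k,ℓ)`: maximum number of arcs of a minimally generalized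
`(k,ℓ)`-arc-strongly connected digraph of order `n`. -/
noncomputable def GMax (n k ℓ : ℕ) : ℕ :=
  sSup {m | ∃ D : Dgr (Fin n), MinASC D k ℓ ∧ D.Arcs.ncard = m}

/-! ### Trees with a prescribed centre -/

/-- The out-tree with root `r` and centre `a`: the path `r → b → a`, followed by arcs from `a` to
the other vertices of `S`. It is encoded by listing, for every non-root vertex, its parent.
The value `b = r` encodes the direct path `r → a`, and `a = b = r` the star centred at `r`. -/
def hubTree (S : Set V) (r a b : V) : Set (V × V) :=
  {p | p.2 ≠ r ∧ ((p.2 = a ∧ p.1 = b) ∨ (p.2 ≠ a ∧ p.2 = b ∧ p.1 = r) ∨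
    (p.2 ≠ a ∧ p.2 ≠ b ∧ p.2 ∈ S ∧ p.1 = a))}

lemma tverts_hubTree_subset {S : Set V} {r a b : V} (hr : r ∈ S) :
    tverts (hubTree S r a b) r ⊆ S ∪ {a, b} := by
  rintro v (⟨u, h | h⟩ | h)
  · simp only [hubTree, Set.mem_ofPred_eq] at h
    simp only [Set.mem_union, Set.mem_insert_iff, Set.mem_singleton_iff]
    tauto
  · simp only [hubTree, Set.mem_ofPred_eq] at h
    simp only [Set.mem_union, Set.mem_insert_iff, Set.mem_singleton_iff]
    rcases h with ⟨_, h | h | h⟩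
    · tauto
    · left; rw [h.2.2]; exact hr
    · tauto
  · left; rw [Set.mem_singleton_iff.1 h]; exact hr

lemma subset_tverts_hubTree {S : Set V} {r a b : V} :
    S ⊆ tverts (hubTree S r a b) r := by
  intro v hv
  by_cases hvr : v = r
  · right; exact hvr
  left
  by_cases hva : v = a
  · exact ⟨b, Or.inl ⟨hvr, Or.inl ⟨hva, rfl⟩⟩⟩
  by_cases hvb : v = b
  · exact ⟨r, Or.inl ⟨hvr, Or.inr (Or.inl ⟨hva, hvb, rfl⟩)⟩⟩
  · exact ⟨a, Or.inl ⟨hvr, Or.inr (Or.inr ⟨hva, hvb, hv, rfl⟩)⟩⟩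

/-- If `a = r` forces the path to be trivial, and otherwise `b ≠ a`, then `hubTree` is an
out-tree. -/
lemma isOutTree_hubTree {S : Set V} {r a b : V} (hba : b = a → a = r)
    (har : a = r → b = r) : IsOutTree (hubTree S r a b) r := by
  have hb : Relation.ReflTransGen (fun x y => (x, y) ∈ hubTree S r a b) r b := by
    by_cases h : b = r
    · rw [h]
    · exact .single ⟨h, Or.inr (Or.inl ⟨fun h' => h (har (hba h')), rfl, rfl⟩)⟩
  have ha : Relation.ReflTransGen (fun x y => (x, y) ∈ hubTree S r a b) r a := by
    by_cases h : a = r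
    · rw [h]
    · exact hb.tail ⟨h, Or.inl ⟨rfl, rfl⟩⟩
  have hpar : ∀ u v, (u, v) ∈ hubTree S r a b →
      Relation.ReflTransGen (fun x y => (x, y) ∈ hubTree S r a b) r u := by
    rintro u v ⟨_, ⟨_, h⟩ | ⟨_, _, h⟩ | ⟨_, _, _, h⟩⟩ <;> simp only at h <;> subst h
    · exact hb
    · exact .refl
    · exact ha
  refine ⟨?_, fun p hp => hp.1, ?_⟩
  · rintro v ⟨u, h | h⟩
    · exact (hpar u v h).tail h
    · exact hpar v u h
  · intro v hv hvr
    have hex : ∃ u, (u, v) ∈ hubTree S r a b := by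
      obtain ⟨u, h | h⟩ := hv
      · exact ⟨u, h⟩
      · rcases Relation.ReflTransGen.cases_tail (hpar v u h) with h' | ⟨w, _, h'⟩
        · exact absurd h' hvr
        · exact ⟨w, h'⟩
    obtain ⟨u, hu⟩ := hex
    refine ⟨u, hu, fun w hw => ?_⟩
    simp only [hubTree, Set.mem_ofPred_eq] at hu hw
    rcases hu with ⟨_, hu | hu | hu⟩ <;> rcases hw with ⟨_, hw | hw | hw⟩ <;> grind

/-! ### The upper bound -/

/-- A tree containing a vertex other than its root has an arc leaving the root. -/
lemma exists_root_arc {D : Dgr V} {S : Set V} {r s : V} {T : Set (V × V)}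
    (hT : IsSRTree D S r T) (hs : s ∈ S) (hsr : s ≠ r) : ∃ c, (r, c) ∈ T := by
  rcases hT.2.2 hs with h | h
  · rcases Relation.ReflTransGen.cases_head (hT.2.1.1 s h) with h' | ⟨c, hc, _⟩
    · exact absurd h'.symm hsr
    · exact ⟨c, hc⟩
  · exact absurd h hsr

/-- Arc-disjoint trees leave the root through different arcs, so their number is bounded; without
this the supremum defining `kappaSr` could take the junk value `0`. -/
lemma bddAbove_trees [Finite V] (D : Dgr V) {S : Set V} {r s : V} (hs : s ∈ S) (hsr : s ≠ r) :
    BddAbove {m | ∃ f : Fin m → Set (V × V), (∀ i, IsSRTree D S r (f i)) ∧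
      ∀ i j, i ≠ j → IntDisj S r (f i) (f j)} := by
  refine ⟨Nat.card V, ?_⟩
  rintro m ⟨f, hf, hd⟩
  choose c hc using fun i => exists_root_arc (hf i) hs hsr
  have hinj : Function.Injective c := by
    intro i j hij
    by_contra hne
    have h : (r, c i) ∈ f i ∩ f j := ⟨hc i, hij ▸ hc j⟩
    rw [(hd i j hne).1] at h
    exact h
  simpa using Nat.card_le_card_of_injective c hinj

/-- If all out-neighbours of `r` lie among the `ℓ` first vertices and `S` avoids those, then
`κ_{S,r} ≤ ℓ`. -/
lemma kappaSr_le_of_indep {n ℓ : ℕ} {D : Dgr (Fin n)} {S : Set (Fin n)} {r s : Fin n}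
    (hs : s ∈ S) (hsr : s ≠ r) (hS : ∀ v ∈ S, ℓ ≤ v.val)
    (hD : ∀ v, D.Adj r v → v.val < ℓ) : kappaSr D S r ≤ ℓ := by
  refine csSup_le ⟨0, fun i => i.elim0, fun i => i.elim0, fun i => i.elim0⟩ ?_
  rintro m ⟨f, hf, hd⟩
  choose c hc using fun i => exists_root_arc (hf i) hs hsr
  have hlt : ∀ i, (c i).val < ℓ := fun i => hD _ ((hf i).1 (hc i))
  have hinj : Function.Injective (fun i => (⟨(c i).val, hlt i⟩ : Fin ℓ)) := by
    intro i j hij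
    have hij' : c i = c j := Fin.ext (by simpa using hij)
    by_contra hne
    have hmem : c i ∈ tverts (f i) r ∩ tverts (f j) r :=
      ⟨Or.inl ⟨r, Or.inl (hc i)⟩, Or.inl ⟨r, Or.inl (hij' ▸ hc j)⟩⟩
    rw [(hd i j hne).2] at hmem
    have := hS _ hmem
    have := hlt i
    omega
  simpa using Fintype.card_le_of_injective _ hinj

/-! ### The lower bound -/

lemma ncard_val_lt {n ℓ : ℕ} (h : ℓ ≤ n) : {v : Fin n | v.val < ℓ}.ncard = ℓ := by
  have : {v : Fin n | v.val < ℓ} = Set.range (Fin.castLE h) := by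
    ext v
    simp only [Set.mem_ofPred_eq, Set.mem_range]
    exact ⟨fun hv => ⟨⟨v.val, hv⟩, rfl⟩, by rintro ⟨i, rfl⟩; simp⟩
  rw [this, ← Set.image_univ, Set.ncard_image_of_injective _ (Fin.castLE_injective h)]
  simp

/-- Distinct vertices of `A ∩ S` can be given distinct private vertices of `B \ S`. -/
lemma exists_spare {n k ℓ : ℕ} (hn : k + ℓ ≤ n) {S : Set (Fin n)} (hS : S.ncard = k) :
    ∃ g : Fin n → Fin n, (∀ a ∈ S, a.val < ℓ → ℓ ≤ (g a).val ∧ g a ∉ S) ∧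
      ∀ a ∈ S, a.val < ℓ → ∀ a' ∈ S, a'.val < ℓ → g a = g a' → a = a' := by
  set A : Set (Fin n) := {v | v.val < ℓ} with hA
  have hAc : A.ncard = ℓ := ncard_val_lt (by omega)
  have h1 := Set.ncard_union_add_ncard_inter A S
  have h2 := Set.ncard_add_ncard_compl (A ∪ S)
  rw [Nat.card_fin] at h2
  have hle : (A ∩ S).encard ≤ ((A ∪ S)ᶜ).encard := by
    rw [← Set.Finite.cast_ncard_eq (Set.toFinite _), ← Set.Finite.cast_ncard_eq (Set.toFinite _)]
    exact_mod_cast (by omega)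
  have : Nonempty (Fin n) ∨ IsEmpty (Fin n) := (isEmpty_or_nonempty _).symm
  rcases this with hne | hemp
  · obtain ⟨g, hg, hinj⟩ := (Set.toFinite (A ∩ S)).exists_injOn_of_encard_le hle
    refine ⟨g, fun a ha hal => ?_, fun a ha hal a' ha' hal' h => hinj ⟨hal, ha⟩ ⟨hal', ha'⟩ h⟩
    have := hg ⟨hal, ha⟩
    simpa [hA] using this
  · exact ⟨id, fun a => hemp.elim a, fun a => hemp.elim a⟩

open Classical in
/-- The `ℓ` trees `hubTree S r a (b a)`, one for each `a ∈ A`, are internally disjoint. -/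
lemma le_kappaSr {n k ℓ : ℕ} (hn : k + ℓ ≤ n) {D : Dgr (Fin n)}
    (hD : ∀ u v : Fin n, D.Adj u v ↔ (u ≠ v ∧ (u.val < ℓ ∨ v.val < ℓ)))
    {S : Set (Fin n)} (hS : S.ncard = k) {r s : Fin n} (hr : r ∈ S) (hs : s ∈ S) (hsr : s ≠ r) :
    ℓ ≤ kappaSr D S r := by
  obtain ⟨g, hg, hginj⟩ := exists_spare hn hS
  refine le_csSup (bddAbove_trees D hs hsr) ?_
  set b : Fin n → Fin n := fun a => if r.val < ℓ ∧ a ∈ S ∧ a ≠ r then g a else r with hb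
  have hbr : ∀ a, (r.val < ℓ ∧ a ∈ S ∧ a ≠ r) → b a = g a := fun a h => if_pos h
  have hbn : ∀ a, ¬ (r.val < ℓ ∧ a ∈ S ∧ a ≠ r) → b a = r := fun a h => if_neg h
  -- a proper intermediate vertex lies in `B \ S`, and occurs only if `r ∈ A` and `a ∈ S`
  have hb1 : ∀ a : Fin n, a.val < ℓ → b a ≠ r →
      r.val < ℓ ∧ a ∈ S ∧ a ≠ r ∧ ℓ ≤ (b a).val ∧ b a ∉ S := by
    intro a ha h
    by_cases hc : r.val < ℓ ∧ a ∈ S ∧ a ≠ r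
    · rw [hbr a hc]
      exact ⟨hc.1, hc.2.1, hc.2.2, hg a hc.2.1 ha⟩
    · exact absurd (hbn a hc) h
  have hb2 : ∀ a a' : Fin n, a.val < ℓ → a'.val < ℓ → b a ≠ r → b a = b a' → a = a' := by
    intro a a' ha ha' h heq
    have h1 := hb1 a ha h
    have h2 := hb1 a' ha' (heq ▸ h)
    rw [hbr a ⟨h1.1, h1.2.1, h1.2.2.1⟩, hbr a' ⟨h2.1, h2.2.1, h2.2.2.1⟩] at heq
    exact hginj a h1.2.1 ha a' h2.2.1 ha' heq
  have hbar : ∀ a, a = r → b a = r := fun a h => hbn a (by tauto)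
  have hba : ∀ a : Fin n, a.val < ℓ → b a = a → a = r := by
    intro a ha h
    by_contra hne
    have := (hb1 a ha (by rw [h]; exact hne)).2.2.2.1
    rw [h] at this
    omega
  -- the arc entering the centre `a` is not used by any other tree
  have key : ∀ a a' : Fin n, a.val < ℓ → a'.val < ℓ → a ≠ a' → ∀ p,
      p ∈ hubTree S r a (b a) → p ∈ hubTree S r a' (b a') → p.2 = a → False := by
    rintro a a' ha ha' hne ⟨u, v⟩ ⟨hvr, h⟩ ⟨_, h'⟩ hva
    simp only at hva hvr h h'
    subst hva
    have hu : u = b v := by tauto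
    have hvb : v ≠ b a' := by
      intro h0
      have := (hb1 a' ha' (h0 ▸ hvr)).2.2.2.1
      rw [← h0] at this
      omega
    obtain ⟨hvS, hua⟩ : v ∈ S ∧ u = a' := by tauto
    have hbv : b v = a' := hu.symm.trans hua
    by_cases har : b v = r
    · -- then `a' = r`, so the path to `v ∈ A ∩ S` was not direct
      have h1 := hbr v ⟨by rw [← har, hbv]; exact ha', hvS, hvr⟩
      apply (hg v hvS ha).2
      rw [← h1, har]
      exact hr
    · have := (hb1 v ha har).2.2.2.1
      rw [hbv] at this
      omega
  have hn' : ℓ ≤ n := by omega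
  refine ⟨fun i => hubTree S r (Fin.castLE hn' i) (b (Fin.castLE hn' i)), ?_, ?_⟩
  · intro i
    beta_reduce
    have ha : (Fin.castLE hn' i).val < ℓ := i.isLt
    generalize Fin.castLE hn' i = a at ha ⊢
    refine ⟨?_, isOutTree_hubTree (hba a ha) (hbar a), subset_tverts_hubTree⟩
    rintro ⟨u, v⟩ ⟨hvr, h⟩
    simp only at hvr h
    change D.Adj u v
    rw [hD]
    rcases h with ⟨hv, hu⟩ | ⟨hva, hv, hu⟩ | ⟨hva, _, _, hu⟩
    · subst hu hv
      exact ⟨fun h => hvr (hba v ha h), Or.inr ha⟩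
    · subst hu
      exact ⟨fun h => hvr h.symm, Or.inl (hb1 a ha (hv ▸ hvr)).1⟩
    · subst hu
      exact ⟨fun h => hva h.symm, Or.inl ha⟩
  · intro i j hij
    have ha : (Fin.castLE hn' i).val < ℓ := i.isLt
    have ha' : (Fin.castLE hn' j).val < ℓ := j.isLt
    have hne : Fin.castLE hn' i ≠ Fin.castLE hn' j :=
      fun h => hij (Fin.castLE_injective hn' h)
    simp only
    generalize Fin.castLE hn' i = a at ha hne ⊢
    generalize Fin.castLE hn' j = a' at ha' hne ⊢
    constructor
    · apply Set.eq_empty_iff_forall_notMem.2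
      rintro p ⟨hp, hp'⟩
      have h1 : p.2 ≠ a := key a a' ha ha' hne p hp hp'
      have h2 : p.2 ≠ a' := key a' a ha' ha hne.symm p hp' hp
      obtain ⟨hpr, h⟩ := hp
      obtain ⟨_, h'⟩ := hp'
      by_cases hpb : p.2 = b a
      · have h3 := hb1 a ha (hpb ▸ hpr)
        have h4 : p.2 = b a' := by
          have : p.2 ∉ S := hpb ▸ h3.2.2.2.2
          tauto
        exact hne (hb2 a a' ha ha' (hpb ▸ hpr) (hpb.symm.trans h4))
      · have hpS : p.2 ∈ S ∧ p.1 = a := by tauto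
        by_cases hpb' : p.2 = b a'
        · exact (hb1 a' ha' (hpb' ▸ hpr)).2.2.2.2 (hpb' ▸ hpS.1)
        · have : p.1 = a' := by tauto
          exact hne (hpS.2.symm.trans this)
    · apply Set.Subset.antisymm
      · rintro v ⟨hv, hv'⟩
        have h := tverts_hubTree_subset hr hv
        have h' := tverts_hubTree_subset hr hv'
        simp only [Set.mem_union, Set.mem_insert_iff, Set.mem_singleton_iff] at h h'
        by_contra hvS
        have hvr : v ≠ r := fun h0 => hvS (h0 ▸ hr)
        rcases h.resolve_left hvS with h | h <;> rcases h'.resolve_left hvS with h' | h'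
        · exact hne (h.symm.trans h')
        · have := (hb1 a' ha' (h' ▸ hvr)).2.2.2.1
          rw [← h', h] at this
          omega
        · have := (hb1 a ha (h ▸ hvr)).2.2.2.1
          rw [← h, h'] at this
          omega
        · exact hne (hb2 a a' ha ha' (h ▸ hvr) (h.symm.trans h'))
      · exact Set.subset_inter subset_tverts_hubTree subset_tverts_hubTree

/-- for `k ≥ 2`, `ℓ ≥ 1` and `n ≥ k + ℓ`, the symmetric
digraph `H₁` whose underlying graph is the join `K_ℓ ∨ K̄_{n-ℓ}` (vertices
of `Fin n` with value `< ℓ` forming the clique part) satisfies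
`κ_k(H₁) = ℓ`. -/
theorem stmt_17 (n k ℓ : ℕ) (hk : 2 ≤ k) (hl : 1 ≤ ℓ) (hn : k + ℓ ≤ n)
    (H₁ : Dgr (Fin n))
    (hH : ∀ u v : Fin n, H₁.Adj u v ↔ (u ≠ v ∧ (u.val < ℓ ∨ v.val < ℓ))) :
    kappaK H₁ k = ℓ := by
  have hother : ∀ S : Set (Fin n), S.ncard = k → ∀ r, ∃ s ∈ S, s ≠ r := fun S hS r =>
    Set.exists_ne_of_one_lt_ncard (by omega) r
  apply le_antisymm
  · have hB : k ≤ ({v : Fin n | v.val < ℓ}ᶜ).ncard := by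
      have h1 := Set.ncard_add_ncard_compl {v : Fin n | v.val < ℓ}
      rw [ncard_val_lt (by omega), Nat.card_fin] at h1
      omega
    obtain ⟨S, hSB, hS⟩ := Set.exists_subset_card_eq hB
    have hSl : ∀ v ∈ S, ℓ ≤ v.val := fun v hv => not_lt.1 (hSB hv)
    obtain ⟨r, hr⟩ : S.Nonempty := Set.nonempty_of_ncard_ne_zero (by omega)
    obtain ⟨s, hs, hsr⟩ := hother S hS r
    have hle : kappaK H₁ k ≤ kappaSr H₁ S r := Nat.sInf_le ⟨S, r, hr, hS, rfl⟩
    refine hle.trans (kappaSr_le_of_indep hs hsr hSl ?_)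
    intro v hv
    have := hSl r hr
    have := ((hH r v).1 hv).2
    omega
  · -- nonemptiness matters here: the infimum of the empty set would be `0`
    have hne : {m | ∃ S : Set (Fin n), ∃ r ∈ S, S.ncard = k ∧ m = kappaSr H₁ S r}.Nonempty := by
      obtain ⟨S, -, hS⟩ := Set.exists_subset_card_eq (s := (Set.univ : Set (Fin n))) (n := k)
        (by rw [Set.ncard_univ, Nat.card_fin]; omega)
      obtain ⟨r, hr⟩ : S.Nonempty := Set.nonempty_of_ncard_ne_zero (by omega)
      exact ⟨_, S, r, hr, hS, rfl⟩
    refine le_csInf hne ?_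
    rintro m ⟨S, r, hr, hS, rfl⟩
    obtain ⟨s, hs, hsr⟩ := hother S hS r
    exact le_kappaSr hn hH hS hr hs hsr

end TreeConn
end

section
/- Let n ≥ 3, let k be an integer with 2 ≤ k ≤ n, and let D be a digraph obtained from the complete digraph ↔K_n by deleting a nonempty arc set M. If D is minimally generalized (k, n−2)-arc-strongly connected, then no two arcs of M have a common head or a common tail, and the subdigraph of ↔K_n induced by the arcs of M is a union of vertex-disjoint directed cycles (2-cycles allowed) covering all but at most one vertex of ↔K_n. -/
/-!
Since `λ_k(D) ≥ n - 2` and every tree of an arc-disjoint family leaves the root and enters each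
other vertex of `S`, every vertex of `D` has out-degree and in-degree at least `n - 2`
(`missing_out_unique`, `missing_in_unique`).  Hence `M` is a partial injection without fixed points.

Conversely, if the missing arcs form a partial injection without fixed points, then `λ_k ≥ n - 2`
(`le_lambdaK_of_partial_injection`).  Given a root `r`, choose `a ≠ r` so that no arc from `r` to a
vertex other than `a` is missing.  For each `i ∉ {r, a}` take the branching `r → i`, `i → v` for all
other `v`, where the one vertex `v` with `i → v` missing is entered from `a` instead, or from `r`
when `v = a`.  Each rerouted arc is determined by its head, which is missed by at most one `i`, so
these `n - 2` spanning branchings are arc-disjoint.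

If some `u` has no out-arc in `M` and some `v ≠ u` no in-arc, then `M ∪ {(u, v)}` is still such a
partial injection, so `λ_k(D - (u, v)) ≥ n - 2`, contradicting minimality.  When no such pair exists,
counting heads and tails of `M` shows that `M` is a cycle factor missing at most one vertex
(`cycleFactorOn_of_saturated`).
-/

/-!
Formalization of directed tree connectivity (Sun, "Extremal results for
directed tree connectivity").

A digraph (no loops, no parallel arcs) on a vertex type `V` is given by an
irreflexive adjacency relation.  Out-trees, `(S,r)`-trees, the parameters
`κ_k`, `λ_k`, minimally generalized `(k,ℓ)`-vertex/arc-strongly connected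
digraphs, the families `D_{n,1}`, `D_{n,2}` and the extremal functions
`f, g, F, G` are defined below.
-/

namespace TreeConn

variable {V : Type}

/-! ### Counting arcs of a tree family at one vertex -/

/-- Every `(S, r)`-tree enters each vertex `v ∈ S` other than the root, and arc-disjoint trees use
different arcs, so a family of arc-disjoint trees is no larger than the in-neighbourhood of `v`. -/
lemma card_family_le_in {V : Type} {D : Dgr V} {S : Set V} {r v : V} {m : ℕ}
    {f : Fin m → Set (V × V)} (hf : ∀ i, IsSRTree D S r (f i))
    (hdis : ∀ i j, i ≠ j → ArcDisj (f i) (f j)) (hv : v ∈ S) (hvr : v ≠ r)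
    (F : Finset V) (hF : ∀ u, D.Adj u v → u ∈ F) : m ≤ F.card := by
  have key : ∀ i, ∃ u, (u, v) ∈ f i := by
    intro i
    obtain ⟨-, ⟨-, -, h3⟩, hS⟩ := hf i
    rcases hS hv with h | h
    · exact (h3 v h hvr).exists
    · exact absurd h hvr
  choose g hg using key
  have hinj : Function.Injective g := by
    intro i j hij
    by_contra hne
    have h1 : (g i, v) ∈ f i ∩ f j := ⟨hg i, hij ▸ hg j⟩
    rw [hdis i j hne] at h1
    exact h1
  have := Finset.card_le_card_of_injOn (s := Finset.univ) (t := F) g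
    (fun i _ => hF _ ((hf i).1 (hg i))) hinj.injOn
  simpa using this

/-- If `S` has a vertex other than `r`, every `(S, r)`-tree leaves `r`, so a family of arc-disjoint
trees is no larger than the out-neighbourhood of `r`. -/
lemma card_family_le_out {V : Type} {D : Dgr V} {S : Set V} {r v : V} {m : ℕ}
    {f : Fin m → Set (V × V)} (hf : ∀ i, IsSRTree D S r (f i))
    (hdis : ∀ i j, i ≠ j → ArcDisj (f i) (f j)) (hv : v ∈ S) (hvr : v ≠ r)
    (F : Finset V) (hF : ∀ u, D.Adj r u → u ∈ F) : m ≤ F.card := by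
  have key : ∀ i, ∃ u, (r, u) ∈ f i := by
    intro i
    obtain ⟨-, ⟨h1, -, -⟩, hS⟩ := hf i
    rcases hS hv with h | h
    · rcases Relation.ReflTransGen.cases_head (h1 v h) with h | ⟨c, hc, -⟩
      · exact absurd h.symm hvr
      · exact ⟨c, hc⟩
    · exact absurd h hvr
  choose g hg using key
  have hinj : Function.Injective g := by
    intro i j hij
    by_contra hne
    have h1 : (r, g i) ∈ f i ∩ f j := ⟨hg i, hij ▸ hg j⟩
    rw [hdis i j hne] at h1
    exact h1
  have := Finset.card_le_card_of_injOn (s := Finset.univ) (t := F) g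
    (fun i _ => hF _ ((hf i).1 (hg i))) hinj.injOn
  simpa using this

/-- The supremum defining `lambdaSr` is over a bounded set as soon as `S` has a vertex besides the
root, so it is not a junk value. -/
lemma bddAbove_family {n : ℕ} (D : Dgr (Fin n)) {S : Set (Fin n)} {r v : Fin n}
    (hv : v ∈ S) (hvr : v ≠ r) :
    BddAbove {m | ∃ f : Fin m → Set (Fin n × Fin n), (∀ i, IsSRTree D S r (f i)) ∧
      ∀ i j, i ≠ j → ArcDisj (f i) (f j)} := by
  refine ⟨(Finset.univ : Finset (Fin n)).card, ?_⟩
  rintro m ⟨f, hf, hdis⟩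
  exact card_family_le_in hf hdis hv hvr Finset.univ (fun u _ => Finset.mem_univ u)

lemma exists_family_of_le_lambdaK {n k ℓ : ℕ} {D : Dgr (Fin n)} (hD : ℓ ≤ lambdaK D k)
    {S : Set (Fin n)} {r v : Fin n} (hS : S.ncard = k) (hr : r ∈ S) (hv : v ∈ S) (hvr : v ≠ r) :
    ∃ m, ℓ ≤ m ∧ ∃ f : Fin m → Set (Fin n × Fin n), (∀ i, IsSRTree D S r (f i)) ∧
      ∀ i j, i ≠ j → ArcDisj (f i) (f j) := by
  have h1 : lambdaK D k ≤ lambdaSr D S r := Nat.sInf_le ⟨S, r, hr, hS, rfl⟩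
  have h2 := Nat.sSup_mem (s := {m | ∃ f : Fin m → Set (Fin n × Fin n),
    (∀ i, IsSRTree D S r (f i)) ∧ ∀ i j, i ≠ j → ArcDisj (f i) (f j)})
    ⟨0, Fin.elim0, fun i => i.elim0, fun i => i.elim0⟩ (bddAbove_family D hv hvr)
  exact ⟨_, hD.trans h1, h2⟩

lemma exists_ncard_eq_of_pair {n k : ℕ} (hk : 2 ≤ k) (hkn : k ≤ n) {x y : Fin n} (hxy : x ≠ y) :
    ∃ S : Set (Fin n), S.ncard = k ∧ x ∈ S ∧ y ∈ S := by
  obtain ⟨T, hT, -, hc⟩ := Finset.exists_subsuperset_card_eq (s := {x, y})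
    (t := (Finset.univ : Finset (Fin n))) (n := k) (Finset.subset_univ _)
    (by rw [Finset.card_pair hxy]; exact hk) (by simpa using hkn)
  exact ⟨T, by rw [Set.ncard_coe_finset, hc], hT (by simp), hT (by simp)⟩

lemma card_compl_triple {n : ℕ} {a b c : Fin n} (hab : a ≠ b) (hac : a ≠ c) (hbc : b ≠ c) :
    (({a, b, c} : Finset (Fin n))ᶜ).card = n - 3 := by
  rw [Finset.card_compl, Fintype.card_fin, Finset.card_eq_three.2 ⟨a, b, c, hab, hac, hbc, rfl⟩]

/-- With `λ_k ≥ n - 2` no vertex has two missing out-arcs. -/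
lemma missing_out_unique {n k : ℕ} (hn : 3 ≤ n) (hk : 2 ≤ k) (hkn : k ≤ n) {D : Dgr (Fin n)}
    (hD : n - 2 ≤ lambdaK D k) {r x y : Fin n} (hx : x ≠ r) (hy : y ≠ r)
    (hrx : ¬ D.Adj r x) (hry : ¬ D.Adj r y) : x = y := by
  by_contra hxy
  obtain ⟨S, hS, hrS, hxS⟩ := exists_ncard_eq_of_pair hk hkn hx.symm
  obtain ⟨m, hm, f, hf, hdis⟩ := exists_family_of_le_lambdaK hD hS hrS hxS hx
  have := card_family_le_out hf hdis hxS hx ({r, x, y}ᶜ) (fun u hu => by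
    simp only [Finset.mem_compl, Finset.mem_insert, Finset.mem_singleton]
    rintro (rfl | rfl | rfl)
    exacts [D.loopless _ hu, hrx hu, hry hu])
  rw [card_compl_triple hx.symm hy.symm hxy] at this
  omega

/-- With `λ_k ≥ n - 2` no vertex has two missing in-arcs. -/
lemma missing_in_unique {n k : ℕ} (hn : 3 ≤ n) (hk : 2 ≤ k) (hkn : k ≤ n) {D : Dgr (Fin n)}
    (hD : n - 2 ≤ lambdaK D k) {v x y : Fin n} (hx : x ≠ v) (hy : y ≠ v)
    (hxv : ¬ D.Adj x v) (hyv : ¬ D.Adj y v) : x = y := by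
  by_contra hxy
  obtain ⟨S, hS, hxS, hvS⟩ := exists_ncard_eq_of_pair hk hkn hx
  obtain ⟨m, hm, f, hf, hdis⟩ := exists_family_of_le_lambdaK hD hS hxS hvS hx.symm
  have := card_family_le_in hf hdis hvS hx.symm ({v, x, y}ᶜ) (fun u hu => by
    simp only [Finset.mem_compl, Finset.mem_insert, Finset.mem_singleton]
    rintro (rfl | rfl | rfl)
    exacts [D.loopless _ hu, hxv hu, hyv hu])
  rw [card_compl_triple hx.symm hy.symm hxy] at this
  omega

/-! ### Arc-disjoint out-branchings in a complete digraph minus a partial injection -/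

/-- The arc set in which every vertex `v ≠ r` has the single in-arc `(p v, v)`. -/
def parentArcs {V : Type} (p : V → V) (r : V) : Set (V × V) := {e | e.2 ≠ r ∧ e.1 = p e.2}

lemma isSRTree_parentArcs {V : Type} {D : Dgr V} {p : V → V} {r : V} (S : Set V)
    (hD : ∀ v, v ≠ r → D.Adj (p v) v)
    (hreach : ∀ v, Relation.ReflTransGen (fun a b => (a, b) ∈ parentArcs p r) r v) :
    IsSRTree D S r (parentArcs p r) := by
  refine ⟨?_, ⟨fun v _ => hreach v, fun e he => he.1, fun v _ hv => ?_⟩, fun v _ => ?_⟩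
  · rintro ⟨u, v⟩ ⟨hv, hu⟩
    simp only at hu hv
    subst hu
    exact hD v hv
  · exact ⟨p v, ⟨hv, rfl⟩, fun u hu => hu.2⟩
  · by_cases hv : v = r
    · exact Or.inr hv
    · exact Or.inl ⟨p v, Or.inl ⟨hv, rfl⟩⟩

open Classical in
/-- Parent function of the `i`-th branching: `r → i`, and `i` is the parent of every other vertex,
except that the vertex `v` with `(i, v)` missing is hung below the auxiliary vertex `a`
(below `r` if `v = a`). -/
noncomputable def branchParent {V : Type} (N : V → V → Prop) (r a i v : V) : V :=
  if v = i then r else if N i v then (if v = a then r else a) else i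

/-- If the missing arcs `N` form a partial injection, the `n - 2` branchings given by
`branchParent N r a i`, for `i ∉ {r, a}`, are arc-disjoint. -/
lemma le_lambdaSr_of_partial_injection {n : ℕ} {D : Dgr (Fin n)}
    {N : Fin n → Fin n → Prop} (hD : ∀ u v, u ≠ v → ¬ N u v → D.Adj u v)
    (hirr : ∀ u, ¬ N u u)
    (hout : ∀ u v w, N u v → N u w → v = w) (hin : ∀ u v w, N u w → N v w → u = v)
    {S : Set (Fin n)} {r v : Fin n} (hv : v ∈ S) (hvr : v ≠ r) :
    n - 2 ≤ lambdaSr D S r := by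
  -- `a` is the head of the missing arc at `r` if there is one, so that `r → i` is present
  -- for all `i ≠ a`.
  obtain ⟨a, har, ha⟩ : ∃ a, a ≠ r ∧ ∀ x, N r x → x = a := by
    by_cases h : ∃ x, N r x
    · obtain ⟨x, hx⟩ := h
      exact ⟨x, fun h => hirr r (h ▸ hx), fun y hy => hout _ _ _ hy hx⟩
    · exact ⟨v, hvr, fun x hx => absurd ⟨x, hx⟩ h⟩
  have hc : (({r, a} : Finset (Fin n))ᶜ).card = n - 2 := by
    rw [Finset.card_compl, Fintype.card_fin, Finset.card_pair har.symm]
  obtain ⟨e, he⟩ : ∃ e : Fin (n - 2) ↪ Fin n, ∀ j, e j ≠ r ∧ e j ≠ a := by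
    refine ⟨((({r, a} : Finset (Fin n))ᶜ).orderEmbOfFin hc).toEmbedding, fun j => ?_⟩
    have h := Finset.orderEmbOfFin_mem _ hc j
    rw [Finset.mem_compl, Finset.mem_insert, Finset.mem_singleton, not_or] at h
    exact h
  refine le_csSup (bddAbove_family D hv hvr)
    ⟨fun j => parentArcs (branchParent N r a (e j)) r, fun j => ?_, fun j l hjl => ?_⟩
  · obtain ⟨hir, hia⟩ := he j
    beta_reduce
    generalize e j = i at hir hia ⊢
    apply isSRTree_parentArcs
    · intro w hw
      unfold branchParent
      split_ifs with h1 h2 h3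
      · subst h1
        exact hD _ _ hw.symm (fun h => hia (ha _ h))
      · exact hD _ _ hw.symm (fun h => hir (hin _ _ _ h2 h))
      · exact hD _ _ (Ne.symm h3) (fun h => hia (hin _ _ _ h2 h))
      · exact hD _ _ (Ne.symm h1) h2
    · -- The depth is at most three: first reach `i`, then `a`, then the remaining vertices.
      have step : ∀ w, w ≠ r → ∀ u, u = branchParent N r a i w →
          Relation.ReflTransGen
            (fun x y => (x, y) ∈ parentArcs (branchParent N r a i) r) r u →
          Relation.ReflTransGen
            (fun x y => (x, y) ∈ parentArcs (branchParent N r a i) r) r w :=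
        fun w hw u hu h => h.tail ⟨hw, hu⟩
      have hi := step i hir r (by simp [branchParent]) .refl
      have haa : Relation.ReflTransGen
          (fun x y => (x, y) ∈ parentArcs (branchParent N r a i) r) r a := by
        by_cases h : N i a
        · exact step a har r (by simp [branchParent, h]) .refl
        · exact step a har i (by simp [branchParent, h, Ne.symm hia]) hi
      intro w
      by_cases hw : w = r
      · rw [hw]
      by_cases h1 : w = i
      · rw [h1]; exact hi
      by_cases h3 : w = a
      · rw [h3]; exact haa
      by_cases h2 : N i w
      · exact step w hw a (by simp [branchParent, h1, h2, h3]) haa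
      · exact step w hw i (by simp [branchParent, h1, h2]) hi
  · have hne : e j ≠ e l := fun h => hjl (e.injective h)
    obtain ⟨hir, hia⟩ := he j
    obtain ⟨hlr, hla⟩ := he l
    beta_reduce
    generalize e j = i at hir hia hne ⊢
    generalize e l = i' at hlr hla hne ⊢
    refine Set.eq_empty_iff_forall_notMem.2 ?_
    rintro ⟨u, w⟩ ⟨⟨-, h1⟩, -, h2⟩
    have h : branchParent N r a i w = branchParent N r a i' w := h1.symm.trans h2
    have h3 : N i w → N i' w → False := fun h h' => hne (hin i i' w h h')
    unfold branchParent at h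
    clear h1 h2 hin hout hirr hD ha
    split_ifs at h <;> simp_all

lemma le_lambdaK_of_partial_injection {n k : ℕ} (hk : 2 ≤ k) (hkn : k ≤ n) {D : Dgr (Fin n)}
    {N : Fin n → Fin n → Prop} (hD : ∀ u v, u ≠ v → ¬ N u v → D.Adj u v)
    (hirr : ∀ u, ¬ N u u)
    (hout : ∀ u v w, N u v → N u w → v = w) (hin : ∀ u v w, N u w → N v w → u = v) :
    n - 2 ≤ lambdaK D k := by
  have hne : {m | ∃ S : Set (Fin n), ∃ r ∈ S, S.ncard = k ∧ m = lambdaSr D S r}.Nonempty := by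
    obtain ⟨S, hS, h0, -⟩ := exists_ncard_eq_of_pair hk hkn
      (x := (⟨0, by omega⟩ : Fin n)) (y := ⟨1, by omega⟩) (by simp)
    exact ⟨_, S, _, h0, hS, rfl⟩
  obtain ⟨S, r, hr, hS, h⟩ := Nat.sInf_mem hne
  obtain ⟨v, hv, hvr⟩ := Set.exists_ne_of_one_lt_ncard (s := S) (by omega) r
  rw [lambdaK, h]
  exact le_lambdaSr_of_partial_injection hD hirr hout hin hv hvr

/-! ### Partial injections with no room for another arc -/

/-- If a loopless partial injection `M` on a finite set admits no pair `u ≠ v` with `u` lacking an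
out-arc and `v` lacking an in-arc, then it is a cycle factor missing at most one vertex: heads and
tails are equinumerous, so the only possible vertex lacking an out-arc is also the only one lacking
an in-arc. -/
lemma cycleFactorOn_of_saturated {V : Type} [Finite V] {M : Set (V × V)}
    (hirr : ∀ p ∈ M, p.1 ≠ p.2)
    (hout : ∀ u v w, (u, v) ∈ M → (u, w) ∈ M → v = w)
    (hin : ∀ u v w, (u, w) ∈ M → (v, w) ∈ M → u = v)
    (hsat : ∀ u v, (∀ x, (u, x) ∉ M) → (∀ x, (x, v) ∉ M) → u = v) :
    ∃ W : Set V, (Wᶜ : Set V).ncard ≤ 1 ∧ CycleFactorOn M W := by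
  have hcard : (Prod.fst '' M).ncard = (Prod.snd '' M).ncard := by
    rw [Set.InjOn.ncard_image, Set.InjOn.ncard_image]
    · rintro ⟨u, w⟩ h1 ⟨v, w'⟩ h2 (rfl : w = w')
      rw [hin _ _ _ h1 h2]
    · rintro ⟨u, v⟩ h1 ⟨u', w⟩ h2 (rfl : u = u')
      rw [hout _ _ _ h1 h2]
  have hsat' : ∀ u v, u ∉ Prod.fst '' M → v ∉ Prod.snd '' M → u = v := by
    intro u v hu hv
    exact hsat u v (fun x hx => hu ⟨_, hx, rfl⟩) (fun x hx => hv ⟨_, hx, rfl⟩)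
  have hex : ∀ u, u ∉ Prod.fst '' M → ∃ v, v ∉ Prod.snd '' M := by
    intro u hu
    by_contra! h
    have h1 : Prod.snd '' M = Set.univ := Set.eq_univ_of_forall h
    have h2 : Prod.fst '' M = Set.univ :=
      Set.eq_of_subset_of_ncard_le (Set.subset_univ _) (by rw [hcard, h1])
    exact hu (h2 ▸ Set.mem_univ u)
  have hsub : Prod.snd '' M ⊆ Prod.fst '' M := by
    intro u hu
    by_contra h
    obtain ⟨v, hv⟩ := hex u h
    exact hv (hsat' u v h hv ▸ hu)
  have heq : Prod.snd '' M = Prod.fst '' M :=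
    Set.eq_of_subset_of_ncard_le hsub hcard.le
  refine ⟨Prod.fst '' M, ?_, ?_, ?_, ?_⟩
  · refine (Set.ncard_le_one (Set.toFinite _)).2 fun u hu w hw => ?_
    obtain ⟨v, hv⟩ := hex u hu
    exact (hsat' u v hu hv).trans (hsat' w v hw hv).symm
  · intro p hp
    exact ⟨⟨p, hp, rfl⟩, heq ▸ ⟨p, hp, rfl⟩, hirr p hp⟩
  · rintro _ ⟨⟨u, v⟩, hp, rfl⟩
    exact ⟨v, hp, fun w hw => hout _ _ _ hw hp⟩
  · intro w hw
    rw [← heq] at hw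
    obtain ⟨⟨u, v⟩, hp, rfl⟩ := hw
    exact ⟨u, hp, fun x hx => hin _ _ _ hx hp⟩

/-- let `D` be obtained from `↔K_n` by deleting a nonempty
arc set `M`.  If `D` is minimally generalized `(k, n-2)`-arc-strongly
connected, then no two arcs of `M` share a head or a tail, and `M` induces
a vertex-disjoint union of directed cycles covering all but at most one
vertex. -/
theorem stmt_19 (n k : ℕ) (hn : 3 ≤ n) (hk : 2 ≤ k) (hkn : k ≤ n)
    (M : Set (Fin n × Fin n)) (hM : M ⊆ (completeD n).Arcs)
    (hMne : M.Nonempty) (D : Dgr (Fin n))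
    (hD : D = (completeD n).deleteArcs M)
    (hmin : MinASC D k (n - 2)) :
    (∀ p ∈ M, ∀ q ∈ M, p ≠ q → p.1 ≠ q.1 ∧ p.2 ≠ q.2) ∧
    ∃ W : Set (Fin n), (Wᶜ : Set (Fin n)).ncard ≤ 1 ∧ CycleFactorOn M W := by
  subst hD
  obtain ⟨hlam, hdel⟩ := hmin
  have hirr : ∀ p ∈ M, p.1 ≠ p.2 := fun p hp => hM hp
  have hnot : ∀ u v, (u, v) ∈ M → ¬ ((completeD n).deleteArcs M).Adj u v :=
    fun u v h h' => h'.2 h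
  have hout : ∀ u v w, (u, v) ∈ M → (u, w) ∈ M → v = w := fun u v w h1 h2 =>
    missing_out_unique hn hk hkn hlam (hirr _ h1).symm (hirr _ h2).symm (hnot _ _ h1) (hnot _ _ h2)
  have hin : ∀ u v w, (u, w) ∈ M → (v, w) ∈ M → u = v := fun u v w h1 h2 =>
    missing_in_unique hn hk hkn hlam (hirr _ h1) (hirr _ h2) (hnot _ _ h1) (hnot _ _ h2)
  refine ⟨?_, cycleFactorOn_of_saturated hirr hout hin ?_⟩
  · rintro ⟨u, v⟩ hp ⟨u', v'⟩ hq hne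
    refine ⟨?_, ?_⟩
    · rintro (rfl : u = u')
      exact hne (by rw [hout _ _ _ hp hq])
    · rintro (rfl : v = v')
      exact hne (by rw [hin _ _ _ hp hq])
  · intro u v hu hv
    by_contra huv
    -- `M ∪ {(u, v)}` is again a partial injection, so deleting `(u, v)` keeps `λ_k ≥ n - 2`.
    have h1 := hdel (u, v) ⟨huv, hu v⟩
    have h2 : n - 2 ≤ lambdaK (((completeD n).deleteArcs M).deleteArc (u, v)) k := by
      refine le_lambdaK_of_partial_injection hk hkn
        (N := fun x y => (x, y) ∈ M ∨ (x, y) = (u, v)) ?_ ?_ ?_ ?_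
      · intro x y hxy h
        exact ⟨⟨hxy, fun h' => h (Or.inl h')⟩, fun h' => h (Or.inr h')⟩
      · rintro x (h | h)
        · exact hirr _ h rfl
        · simp only [Prod.mk.injEq] at h
          exact huv (h.1.symm.trans h.2)
      · simp only [Prod.mk.injEq]
        rintro x y z (h | h) (h' | h')
        · exact hout _ _ _ h h'
        · exact absurd (h'.1 ▸ h) (hu y)
        · exact absurd (h.1 ▸ h') (hu z)
        · exact h.2.trans h'.2.symm
      · simp only [Prod.mk.injEq]
        rintro x y z (h | h) (h' | h')
        · exact hin _ _ _ h h'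
        · exact absurd (h'.2 ▸ h) (hv x)
        · exact absurd (h.2 ▸ h') (hv y)
        · exact h.1.trans h'.1.symm
    omega

end TreeConn
end
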